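/- Define h₁ := s∘i∘s, h₂ := s∘i∘s∘t, h₃ := i∘s∘t∘s, h₄ := i (maps on ℝ⁵). Then the hⱼ satisfy the Coxeter presentation relations of S₅: hⱼ∘hⱼ = id for j = 1,2,3,4; hⱼ∘hₖ∘hⱼ = hₖ∘hⱼ∘hₖ whenever |j−k| = 1; and hⱼ∘hₖ = hₖ∘hⱼ whenever |j−k| ≥ 2. Moreover i = h₄, t = h₁∘h₂, and s = (h₂∘h₁∘h₃∘h₄)∘(h₂∘h₁∘h₃∘h₄)∘h₂∘h₁. -/

import Mathlib

noncomputable section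

/-- Quintuplets `(z₁, z₂, z₃, z₄, z₀)` of real numbers. -/
abbrev R5 : Type := ℝ × ℝ × ℝ × ℝ × ℝ

/-- `s(z₁,z₂,z₃,z₄,z₀) = (z₀,z₄,z₃,z₂,z₁)`. -/
def sMap : R5 → R5 := fun z => (z.2.2.2.2, z.2.2.2.1, z.2.2.1, z.2.1, z.1)

/-- `t(z₁,z₂,z₃,z₄,z₀) = (z₂,−z₃−1,−z₁−1,z₄,z₀)`. -/
def tMap : R5 → R5 := fun z => (z.2.1, -z.2.2.1 - 1, -z.1 - 1, z.2.2.2.1, z.2.2.2.2)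

/-- `i(z₁,z₂,z₃,z₄,z₀) = (z₁,z₂,z₃,z₀,z₄)`. -/
def iMap : R5 → R5 := fun z => (z.1, z.2.1, z.2.2.1, z.2.2.2.2, z.2.2.2.1)

/-- `h₁ = s∘i∘s`. -/
def h1 : R5 → R5 := sMap ∘ iMap ∘ sMap
/-- `h₂ = s∘i∘s∘t`. -/
def h2 : R5 → R5 := sMap ∘ iMap ∘ sMap ∘ tMap
/-- `h₃ = i∘s∘t∘s`. -/
def h3 : R5 → R5 := iMap ∘ sMap ∘ tMap ∘ sMap
/-- `h₄ = i`. -/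
def h4 : R5 → R5 := iMap

/-!
In the coordinates `(z₂, z₁, -z₃ - 1, z₀, z₄)` the maps `h₁, h₂, h₃, h₄` are the four adjacent
transpositions of the five entries, and `s` is the reversal of their order. The Coxeter relations
and the word for `s` are therefore images of identities in the symmetric group on `Fin 5`, and
`t = h₁ ∘ h₂` because `h₂ = h₁ ∘ t` with `h₁` an involution.
-/

open Equiv

theorem swap_braid {α : Type*} [DecidableEq α] {a b c : α} (hab : a ≠ b) (hbc : b ≠ c) :
    swap a b * swap b c * swap a b = swap b c * swap a b * swap b c := by
  rcases eq_or_ne a c with rfl | hac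
  · rw [swap_comm b a]
  · calc swap a b * swap b c * swap a b
        = swap b a * swap c b * swap b a := by rw [swap_comm a b, swap_comm b c]
      _ = swap a c := swap_mul_swap_mul_swap hbc.symm hac.symm
      _ = swap c a := swap_comm a c
      _ = swap b c * swap a b * swap b c := (swap_mul_swap_mul_swap hab hac).symm

section PermuteCoords

variable {X ι R : Type*}

/-- The map `X → X` that permutes the coordinates given by `e` along `σ`. The coordinate with
index `j` is moved to index `σ j`, so that `σ ↦ permuteCoords e σ` is multiplicative. -/
def permuteCoords (e : X ≃ (ι → R)) (σ : Perm ι) : X → X :=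
  fun x => e.symm (e x ∘ σ.symm)

theorem eq_permuteCoords {e : X ≃ (ι → R)} {σ : Perm ι} {f : X → X}
    (h : ∀ x j, e (f x) (σ j) = e x j) : f = permuteCoords e σ := by
  funext x
  refine e.eq_symm_apply.mpr (funext fun j => ?_)
  simpa only [apply_symm_apply, Function.comp_apply] using h x (σ.symm j)

variable (e : X ≃ (ι → R))

theorem permuteCoords_one : permuteCoords e 1 = id :=
  funext e.symm_apply_apply

theorem permuteCoords_mul (σ τ : Perm ι) :
    permuteCoords e (σ * τ) = permuteCoords e σ ∘ permuteCoords e τ := by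
  funext x
  simp only [permuteCoords, Function.comp_apply, apply_symm_apply]
  rfl

theorem permuteCoords_comm {σ τ : Perm ι} (h : Commute σ τ) :
    permuteCoords e σ ∘ permuteCoords e τ = permuteCoords e τ ∘ permuteCoords e σ := by
  rw [← permuteCoords_mul, ← permuteCoords_mul, h.eq]

variable [DecidableEq ι]

theorem permuteCoords_swap_comp_self (a b : ι) :
    permuteCoords e (swap a b) ∘ permuteCoords e (swap a b) = id := by
  rw [← permuteCoords_mul, swap_mul_self, permuteCoords_one]

theorem permuteCoords_swap_braid {a b c : ι} (hab : a ≠ b) (hbc : b ≠ c) :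
    permuteCoords e (swap a b) ∘ permuteCoords e (swap b c) ∘ permuteCoords e (swap a b) =
      permuteCoords e (swap b c) ∘ permuteCoords e (swap a b) ∘ permuteCoords e (swap b c) := by
  simp only [← permuteCoords_mul, ← mul_assoc, swap_braid hab hbc]

end PermuteCoords

/-- The coordinates `(z₂, z₁, -z₃ - 1, z₀, z₄)` on quintuplets `(z₁, z₂, z₃, z₄, z₀)`, chosen so
that `h₁, h₂, h₃, h₄` become the adjacent transpositions. -/
def adaptedCoords : R5 ≃ (Fin 5 → ℝ) where
  toFun z := ![z.2.1, z.1, -z.2.2.1 - 1, z.2.2.2.2, z.2.2.2.1]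
  invFun v := (v 1, v 0, -v 2 - 1, v 4, v 3)
  left_inv z := by simp
  right_inv v := by
    funext j
    fin_cases j <;> simp

theorem h1_eq_permuteCoords_swap : h1 = permuteCoords adaptedCoords (swap 0 1) :=
  eq_permuteCoords fun z j => by
    fin_cases j <;> simp [adaptedCoords, h1, sMap, iMap, swap_apply_def]

theorem h2_eq_permuteCoords_swap : h2 = permuteCoords adaptedCoords (swap 1 2) :=
  eq_permuteCoords fun z j => by
    fin_cases j <;> simp [adaptedCoords, h2, sMap, iMap, tMap, swap_apply_def]

theorem h3_eq_permuteCoords_swap : h3 = permuteCoords adaptedCoords (swap 2 3) :=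
  eq_permuteCoords fun z j => by
    fin_cases j <;> simp [adaptedCoords, h3, sMap, iMap, tMap, swap_apply_def]

theorem h4_eq_permuteCoords_swap : h4 = permuteCoords adaptedCoords (swap 3 4) :=
  eq_permuteCoords fun z j => by
    fin_cases j <;> simp [adaptedCoords, h4, iMap, swap_apply_def]

theorem sMap_eq_permuteCoords_revPerm : sMap = permuteCoords adaptedCoords Fin.revPerm :=
  eq_permuteCoords fun z j => by
    fin_cases j <;> simp [adaptedCoords, sMap, Fin.rev]

theorem h1_comp_h1 : h1 ∘ h1 = id := by
  rw [h1_eq_permuteCoords_swap, permuteCoords_swap_comp_self]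

theorem tMap_eq_h1_comp_h2 : tMap = h1 ∘ h2 :=
  calc tMap = (h1 ∘ h1) ∘ tMap := by rw [h1_comp_h1, Function.id_comp]
    _ = h1 ∘ h2 := rfl

theorem revPerm_eq_prod_swap : (Fin.revPerm : Perm (Fin 5)) =
    (swap 1 2 * (swap 0 1 * (swap 2 3 * swap 3 4))) *
      ((swap 1 2 * (swap 0 1 * (swap 2 3 * swap 3 4))) * (swap 1 2 * swap 0 1)) := by
  decide

theorem sMap_eq_comp :
    sMap = (h2 ∘ h1 ∘ h3 ∘ h4) ∘ (h2 ∘ h1 ∘ h3 ∘ h4) ∘ h2 ∘ h1 := by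
  simp only [sMap_eq_permuteCoords_revPerm, revPerm_eq_prod_swap, permuteCoords_mul,
    h1_eq_permuteCoords_swap, h2_eq_permuteCoords_swap, h3_eq_permuteCoords_swap,
    h4_eq_permuteCoords_swap]

theorem stmt3 :
    (h1 ∘ h1 = id ∧ h2 ∘ h2 = id ∧ h3 ∘ h3 = id ∧ h4 ∘ h4 = id) ∧
    (h1 ∘ h2 ∘ h1 = h2 ∘ h1 ∘ h2 ∧ h2 ∘ h3 ∘ h2 = h3 ∘ h2 ∘ h3 ∧
      h3 ∘ h4 ∘ h3 = h4 ∘ h3 ∘ h4) ∧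
    (h1 ∘ h3 = h3 ∘ h1 ∧ h1 ∘ h4 = h4 ∘ h1 ∧ h2 ∘ h4 = h4 ∘ h2) ∧
    iMap = h4 ∧ tMap = h1 ∘ h2 ∧
    sMap = (h2 ∘ h1 ∘ h3 ∘ h4) ∘ (h2 ∘ h1 ∘ h3 ∘ h4) ∘ h2 ∘ h1 := by
  refine ⟨?involutions, ?braids, ?commutations, rfl, tMap_eq_h1_comp_h2, sMap_eq_comp⟩
  all_goals rw [h1_eq_permuteCoords_swap, h2_eq_permuteCoords_swap, h3_eq_permuteCoords_swap,
    h4_eq_permuteCoords_swap]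
  case involutions =>
    exact ⟨permuteCoords_swap_comp_self _ 0 1, permuteCoords_swap_comp_self _ 1 2,
      permuteCoords_swap_comp_self _ 2 3, permuteCoords_swap_comp_self _ 3 4⟩
  case braids =>
    refine ⟨permuteCoords_swap_braid _ ?_ ?_, permuteCoords_swap_braid _ ?_ ?_,
      permuteCoords_swap_braid _ ?_ ?_⟩ <;> decide
  case commutations =>
    exact ⟨permuteCoords_comm _ (Perm.disjoint_swap_swap (by decide)).commute,
      permuteCoords_comm _ (Perm.disjoint_swap_swap (by decide)).commute,
      permuteCoords_comm _ (Perm.disjoint_swap_swap (by decide)).commute⟩
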